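/- arXiv:1906.06020 — 2 statements merged into one kernel-verified Lean document; each statement's English description precedes it below -/
import Mathlib

section
/- Convexity and unique minimizer of the marginal-likelihood computing-time function (Proposition A1(i)): for every fixed v > 0, the function CT_ML(x) := ((v+1)e^x − 1)/x is strictly convex on (0, ∞) and possesses a unique minimizer x*(v) ∈ (0, ∞). -/
open Set

/-- **Proposition A1(i).**  For every fixed `v > 0`, the marginal-likelihood
computing-time function `CT_ML x = ((v+1) * exp x - 1) / x` is strictly convex
on `(0, ∞)` and possesses a unique minimizer there. -/
theorem marginal_likelihood_computing_time_strictly_convex_unique_minimizer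
    (v : ℝ) (hv : 0 < v) :
    StrictConvexOn ℝ (Ioi (0 : ℝ))
      (fun x : ℝ => ((v + 1) * Real.exp x - 1) / x)
    ∧ ∃! xstar : ℝ, xstar ∈ Ioi (0 : ℝ) ∧ ∀ y ∈ Ioi (0 : ℝ),
        ((v + 1) * Real.exp xstar - 1) / xstar ≤ ((v + 1) * Real.exp y - 1) / y := by
  have d1 : ∀ x : ℝ, 0 < x → HasDerivAt (fun x : ℝ => ((v + 1) * Real.exp x - 1) / x)
      (((v + 1) * Real.exp x * (x - 1) + 1) / x ^ 2) x := by
    intro x hx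
    have h := (((Real.hasDerivAt_exp x).const_mul (v + 1)).sub_const 1).div
      (hasDerivAt_id x) hx.ne'
    refine h.congr_deriv ?_
    simp only [id]
    ring
  have d2 : ∀ x : ℝ, 0 < x →
      HasDerivAt (fun x : ℝ => ((v + 1) * Real.exp x * (x - 1) + 1) / x ^ 2)
      (((v + 1) * Real.exp x * (x ^ 2 - 2 * x + 2) - 2) / x ^ 3) x := by
    intro x hx
    have h := ((((Real.hasDerivAt_exp x).const_mul (v + 1)).mul
      ((hasDerivAt_id x).sub_const 1)).add_const 1).div
      (hasDerivAt_pow 2 x) (by positivity)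
    refine h.congr_deriv ?_
    simp only [id, Pi.mul_apply]
    field_simp
    ring
  have hconv : StrictConvexOn ℝ (Ioi (0 : ℝ))
      (fun x : ℝ => ((v + 1) * Real.exp x - 1) / x) := by
    apply strictConvexOn_of_deriv2_pos' (convex_Ioi 0)
    · intro x hx
      exact (d1 x hx).continuousAt.continuousWithinAt
    · intro x hx
      have hx0 : 0 < x := hx
      have he : deriv (fun x : ℝ => ((v + 1) * Real.exp x - 1) / x) =ᶠ[nhds x]
          (fun x : ℝ => ((v + 1) * Real.exp x * (x - 1) + 1) / x ^ 2) := by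
        filter_upwards [Ioi_mem_nhds hx0] with y hy
        exact (d1 y hy).deriv
      have : deriv^[2] (fun x : ℝ => ((v + 1) * Real.exp x - 1) / x) x
          = ((v + 1) * Real.exp x * (x ^ 2 - 2 * x + 2) - 2) / x ^ 3 := by
        simp only [Function.iterate_succ, Function.iterate_zero, Function.comp, id]
        rw [he.deriv_eq, (d2 x hx0).deriv]
      rw [this]
      apply div_pos _ (by positivity)
      have hq : 0 < x ^ 2 - 2 * x + 2 := by nlinarith [sq_nonneg (x - 1)]
      have h1 := mul_le_mul_of_nonneg_right (Real.quadratic_le_exp_of_nonneg hx0.le) hq.le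
      have h2 : (1 + x + x ^ 2 / 2) * (x ^ 2 - 2 * x + 2) = 2 + x ^ 4 / 2 := by ring
      have h3 : 0 < x ^ 4 := by positivity
      have h4 : 0 < v * (Real.exp x * (x ^ 2 - 2 * x + 2)) := by positivity
      nlinarith
  refine ⟨hconv, ?_⟩
  obtain ⟨x0, ⟨h0, h1⟩, hx⟩ : ∃ x ∈ Ioo (0 : ℝ) 1, (v + 1) * Real.exp x * (x - 1) + 1 = 0 := by
    have := intermediate_value_Ioo (f := fun x : ℝ => (v + 1) * Real.exp x * (x - 1) + 1)
      (zero_le_one) (by fun_prop)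
    exact this ⟨by simp; linarith, by simp⟩
  have hmin : ∀ y ∈ Ioi (0 : ℝ),
      ((v + 1) * Real.exp x0 - 1) / x0 ≤ ((v + 1) * Real.exp y - 1) / y := by
    intro y hy
    have hy0 : 0 < y := hy
    have e1 : ((v + 1) * Real.exp x0 - 1) / x0 = (v + 1) * Real.exp x0 := by
      rw [div_eq_iff h0.ne']
      linarith
    rw [e1, le_div_iff₀ hy0]
    have e2 : Real.exp y = Real.exp x0 * Real.exp (y - x0) := by
      rw [← Real.exp_add]; congr 1; ring
    have e3 : 0 < (v + 1) * Real.exp x0 := by positivity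
    rw [e2]
    have := mul_le_mul_of_nonneg_left (Real.add_one_le_exp (y - x0)) e3.le
    linarith
  refine ⟨x0, ⟨h0, hmin⟩, ?_⟩
  rintro z ⟨hz, hzmin⟩
  exact hconv.eq_of_isMinOn (fun y hy => hzmin y hy) (fun y hy => hmin y hy) hz h0
end

section
/- Behaviour of the optimal log-likelihood variance for marginal likelihood estimation (Proposition A1(ii)): for v > 0, the unique minimizer x*(v) of CT_ML(x) = ((v+1)e^x − 1)/x on (0, ∞) lies in the interval (0, 1), satisfies the first-order condition (v+1) e^{x*(v)} (1 − x*(v)) = 1, is strictly increasing as a function of v, and converges to 1 as v → ∞. -/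
open Set Filter

/-- **Proposition A1(ii).**  For `v > 0`, let `xstar v` be the (unique)
minimizer on `(0, ∞)` of the marginal-likelihood computing-time function
`CT_ML x = ((v+1) * exp x - 1) / x`.  Then `xstar v` lies in `(0, 1)`,
satisfies the first-order condition `(v+1) * exp (xstar v) * (1 - xstar v) = 1`,
is strictly increasing as a function of `v` on `(0, ∞)`, and converges to `1`
as `v → ∞`. -/
theorem marginal_likelihood_optimal_loglik_variance
    (xstar : ℝ → ℝ)
    (hmin : ∀ v : ℝ, 0 < v → 0 < xstar v ∧ ∀ y : ℝ, 0 < y →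
      ((v + 1) * Real.exp (xstar v) - 1) / xstar v
        ≤ ((v + 1) * Real.exp y - 1) / y) :
    (∀ v : ℝ, 0 < v → xstar v ∈ Ioo (0 : ℝ) 1
      ∧ (v + 1) * Real.exp (xstar v) * (1 - xstar v) = 1)
    ∧ StrictMonoOn xstar (Ioi (0 : ℝ))
    ∧ Tendsto xstar atTop (nhds 1) := by
  have key : ∀ v : ℝ, 0 < v → xstar v ∈ Ioo (0 : ℝ) 1
      ∧ (v + 1) * Real.exp (xstar v) * (1 - xstar v) = 1 := by
    intro v hv
    obtain ⟨hx, hm⟩ := hmin v hv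
    have hloc : IsLocalMin (fun y : ℝ => ((v + 1) * Real.exp y - 1) / y) (xstar v) := by
      filter_upwards [Ioi_mem_nhds hx] with y hy
      exact hm y hy
    have hd : HasDerivAt (fun y : ℝ => ((v + 1) * Real.exp y - 1) / y)
        (((v + 1) * Real.exp (xstar v) * xstar v - ((v + 1) * Real.exp (xstar v) - 1) * 1)
          / xstar v ^ 2) (xstar v) :=
      (((Real.hasDerivAt_exp (xstar v)).const_mul (v + 1)).sub_const 1).div
        (hasDerivAt_id (xstar v)) hx.ne'
    have h0 := hloc.hasDerivAt_eq_zero hd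
    rw [div_eq_zero_iff] at h0
    have hfoc : (v + 1) * Real.exp (xstar v) * (1 - xstar v) = 1 := by
      rcases h0 with h0 | h0
      · linarith
      · exact absurd h0 (pow_pos hx 2).ne'
    refine ⟨⟨hx, ?_⟩, hfoc⟩
    by_contra hc
    have hp : 0 < (v + 1) * Real.exp (xstar v) := by positivity
    nlinarith
  refine ⟨key, ?_, ?_⟩
  · intro v hv w hw hvw
    by_contra hc
    have hab : xstar w ≤ xstar v := not_lt.mp hc
    obtain ⟨⟨ha0, ha1⟩, ha⟩ := key w hw
    obtain ⟨⟨hb0, hb1⟩, hb⟩ := key v hv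
    have hv' : 0 < v := hv
    generalize xstar w = a at *
    generalize xstar v = b at *
    have h1 : Real.exp a = Real.exp b * Real.exp (a - b) := by
      rw [← Real.exp_add]; congr 1; ring
    have h2 : (a - b) + 1 ≤ Real.exp (a - b) := Real.add_one_le_exp _
    have hea := Real.exp_pos a
    have heb := Real.exp_pos b
    have h3 : Real.exp b * (1 - b) ≤ Real.exp a * (1 - a) := by
      rw [h1, mul_assoc]
      apply mul_le_mul_of_nonneg_left _ heb.le
      have := mul_le_mul_of_nonneg_right h2 (sub_nonneg.mpr ha1.le)
      nlinarith [mul_nonneg ha0.le (sub_nonneg.mpr hab)]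
    have h4 : 0 < Real.exp a * (1 - a) := mul_pos hea (sub_pos.mpr ha1)
    have h5 := mul_le_mul_of_nonneg_left h3 (by linarith : 0 ≤ v + 1)
    have h6 := mul_pos (sub_pos.mpr hvw) h4
    nlinarith
  · have hl : Tendsto (fun v : ℝ => 1 - (v + 1)⁻¹) atTop (nhds 1) := by
      have := (tendsto_inv_atTop_zero.comp
        (tendsto_atTop_add_const_right atTop (1 : ℝ) tendsto_id)).const_sub (1 : ℝ)
      simpa using this
    refine tendsto_of_tendsto_of_tendsto_of_le_of_le' hl tendsto_const_nhds ?_ ?_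
    · filter_upwards [eventually_gt_atTop 0] with v hv
      obtain ⟨⟨h0, h1⟩, h⟩ := key v hv
      have he : 1 ≤ Real.exp (xstar v) := Real.one_le_exp h0.le
      have hp : 0 < (v + 1) := by linarith
      have hq : (1 - xstar v) ≤ (v + 1)⁻¹ := by
        rw [le_inv_comm₀ (by linarith) hp, ← one_div, le_div_iff₀ (by linarith)]
        have := mul_nonneg (mul_nonneg hp.le (sub_nonneg.mpr he)) (sub_nonneg.mpr h1.le)
        nlinarith
      linarith
    · filter_upwards [eventually_gt_atTop 0] with v hv
      exact (key v hv).1.2.le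
end
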